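/- Let S be a complete Noetherian local domain of prime characteristic p with perfect residue field, and let m = dim S. Then S, viewed as a module over itself via the Frobenius endomorphism f : S → S (i.e. the module ᶠS with action s · x = s^p x), is a torsion-free module of generic rank p^m over S; consequently there is a short exact sequence of S-modules 0 → S^{p^m} → ᶠS → Q → 0 in which Q is a finitely generated S-module with dim Q < m. -/

import Mathlib

open IsLocalRing

/-- An `R`-module `M`, with scalars restricted along the `e`-th iterated Frobenius
`r ↦ r^{p^e}` (so `r • x = r^{p^e} • x`). -/
def FrobRestrict (R : Type*) [CommSemiring R] (p e : ℕ) [ExpChar R p]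
    (M : Type*) [AddCommGroup M] [Module R M] : Type _ := M

instance FrobRestrict.instAddCommGroup (R : Type*) [CommSemiring R] (p e : ℕ) [ExpChar R p]
    (M : Type*) [AddCommGroup M] [Module R M] : AddCommGroup (FrobRestrict R p e M) :=
  inferInstanceAs (AddCommGroup M)

instance FrobRestrict.instModule (R : Type*) [CommSemiring R] (p e : ℕ) [ExpChar R p]
    (M : Type*) [AddCommGroup M] [Module R M] : Module R (FrobRestrict R p e M) :=
  Module.compHom M (iterateFrobenius R p e)

/-!
By completeness the perfect residue field `κ` lifts to a coefficient field of `S`, so sending the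
variables to a system of parameters makes `S` a finite extension of `A = κ⟦X₁, …, Xₘ⟧`. For `A`
the Frobenius rank is read off a basis: as `κ` is perfect, the monomials with all exponents less
than `p ^ e` form a basis of `A` over its `p ^ e`-th powers. In the commutative square with sides
`A → S`, the Frobenius of `S`, and the Frobenius of `A`, `A → S` again, multiplicativity of ranks
shows that the ranks of the two Frobenius maps agree. Finally, a maximal free submodule has torsion
cokernel, and a finitely generated torsion module is supported on a proper closed subset.
-/

open nonZeroDivisors

/-! ### Generic ranks over domains -/

attribute [local instance] FractionRing.liftAlgebra in
theorem finrank_mul_finrank_of_isDomain (R B C : Type*) [CommRing R] [IsDomain R] [CommRing B]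
    [IsDomain B] [CommRing C] [IsDomain C] [Algebra R B] [Algebra B C] [Algebra R C]
    [IsScalarTower R B C] [FaithfulSMul R B] [FaithfulSMul B C] :
    Module.finrank R B * Module.finrank B C = Module.finrank R C := by
  have : FaithfulSMul R C := .trans R B C
  rw [← IsFractionRing.finrank_eq R (FractionRing R) B (FractionRing B),
    ← IsFractionRing.finrank_eq B (FractionRing B) C (FractionRing C),
    ← IsFractionRing.finrank_eq R (FractionRing R) C (FractionRing C)]
  exact Module.finrank_mul_finrank _ _ _

section GenericRank

variable (R M : Type*) [CommRing R] [IsDomain R] [AddCommGroup M] [Module R M] [Module.Finite R M]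

theorem exists_injective_isTorsion_quotient_range :
    ∃ f : (Fin (Module.finrank R M) → R) →ₗ[R] M,
      Function.Injective f ∧ Module.IsTorsion R (M ⧸ LinearMap.range f) := by
  obtain ⟨f, hf⟩ := Module.le_rank_iff_exists_linearMap.mp (Module.finrank_eq_rank R M).le
  refine ⟨f, hf, Module.finrank_eq_zero_iff_isTorsion.mp ?_⟩
  have := Submodule.finrank_quotient_add_finrank (LinearMap.range f)
  rwa [LinearMap.finrank_range_of_inj hf, Module.finrank_fin_fun, Nat.add_eq_right] at this

theorem rank_fractionRing_tensorProduct :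
    Module.rank (FractionRing R) (TensorProduct R (FractionRing R) M) = Module.finrank R M := by
  rw [← Cardinal.lift_inj, (TensorProduct.isBaseChange R M (FractionRing R)).lift_rank_eq,
    ← Module.finrank_eq_rank R M, Cardinal.lift_natCast, Cardinal.lift_natCast]

end GenericRank

/-! ### Krull dimension -/

theorem ringKrullDim_quotient_lt_of_mem_nonZeroDivisors {R : Type*} [CommRing R]
    [FiniteRingKrullDim R] {I : Ideal R} {r : R} (hr : r ∈ R⁰) (hrI : r ∈ I) :
    ringKrullDim (R ⧸ I) < ringKrullDim R := by
  have h := ringKrullDim_succ_le_of_surjective _ Ideal.Quotient.mk_surjective hr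
    (Ideal.Quotient.eq_zero_iff_mem.mpr hrI)
  rw [show ringKrullDim R = _ from Order.krullDim_eq_length_of_finiteDimensionalOrder] at h ⊢
  exact ENat.WithBot.add_one_le_natCast_iff.mp h

theorem supportDim_lt_ringKrullDim_of_isTorsion {R M : Type*} [CommRing R] [FiniteRingKrullDim R]
    [AddCommGroup M] [Module R M] [Module.Finite R M] (hM : Module.IsTorsion R M) :
    Module.supportDim R M < ringKrullDim R := by
  obtain ⟨r, hrM, hr⟩ := Submodule.annihilator_top_inter_nonZeroDivisors hM
  rw [Submodule.annihilator_top] at hrM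
  rw [Module.supportDim_eq_ringKrullDim_quotient_annihilator]
  exact ringKrullDim_quotient_lt_of_mem_nonZeroDivisors hr hrM

theorem ringKrullDim_le_of_isIntegral (A S : Type*) [CommRing A] [CommRing S] [Algebra A S]
    [Algebra.IsIntegral A S] : ringKrullDim S ≤ ringKrullDim A :=
  Order.krullDim_le_of_strictMono (PrimeSpectrum.comap (algebraMap A S)) fun _ _ hPQ ↦
    Ideal.IsIntegral.comap_lt_comap hPQ

theorem ringKrullDim_le_quotient_ker_of_isIntegral (A S : Type*) [CommRing A] [CommRing S]
    [Algebra A S] [Algebra.IsIntegral A S] :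
    ringKrullDim S ≤ ringKrullDim (A ⧸ RingHom.ker (algebraMap A S)) := by
  let _ : Algebra (A ⧸ RingHom.ker (algebraMap A S)) S := (algebraMap A S).kerLift.toAlgebra
  have : IsScalarTower A (A ⧸ RingHom.ker (algebraMap A S)) S := .of_algebraMap_eq fun _ ↦ rfl
  have : Algebra.IsIntegral (A ⧸ RingHom.ker (algebraMap A S)) S := .tower_top A
  exact ringKrullDim_le_of_isIntegral _ S

theorem algebraMap_injective_of_ringKrullDim_le {A S : Type*} [CommRing A] [IsDomain A]
    [FiniteRingKrullDim A] [CommRing S] [Algebra A S] [Algebra.IsIntegral A S]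
    (hdim : ringKrullDim A ≤ ringKrullDim S) : Function.Injective (algebraMap A S) := by
  rw [injective_iff_map_eq_zero]
  intro a ha
  by_contra ha0
  have hlt : ringKrullDim (A ⧸ RingHom.ker (algebraMap A S)) < ringKrullDim A :=
    ringKrullDim_quotient_lt_of_mem_nonZeroDivisors (mem_nonZeroDivisors_of_ne_zero ha0) ha
  exact (hdim.trans (ringKrullDim_le_quotient_ker_of_isIntegral A S)).not_gt hlt

section PowerSeries

open PowerSeries

theorem powerSeries_X_mem_jacobson (A : Type*) [CommRing A] :
    (X : PowerSeries A) ∈ Ring.jacobson (PowerSeries A) := by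
  rw [← Ideal.jacobson_bot, Ideal.mem_jacobson_bot]
  simp [isUnit_iff_constantCoeff]

theorem ker_powerSeries_constantCoeff (A : Type*) [CommRing A] :
    RingHom.ker (constantCoeff (R := A)) = Ideal.span {X} := by
  ext f
  rw [RingHom.mem_ker, ← X_dvd_iff, Ideal.mem_span_singleton]

theorem ringKrullDim_powerSeries (A : Type*) [CommRing A] [IsNoetherianRing A] :
    ringKrullDim (PowerSeries A) = ringKrullDim A + 1 := by
  have hX : IsSMulRegular (PowerSeries A) (X : PowerSeries A) :=
    Module.Flat.isSMulRegular_of_nonZeroDivisors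
      (MvPowerSeries.X_mem_nonzeroDivisors (R := A) (i := ()))
  rw [← ringKrullDim_quotient_span_singleton_succ_eq_ringKrullDim_of_mem_jacobson
    hX (powerSeries_X_mem_jacobson A), ← ker_powerSeries_constantCoeff,
    ringKrullDim_eq_of_ringEquiv (RingHom.quotientKerEquivOfSurjective constantCoeff_surj)]

theorem ringKrullDim_mvPowerSeries_fin (k : Type*) [Field k] (n : ℕ) :
    ringKrullDim (MvPowerSeries (Fin n) k) = n := by
  induction n with
  | zero => rw [ringKrullDim_eq_of_ringEquiv (MvPowerSeries.isEmptyEquiv (Fin 0) k).toRingEquiv,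
      ringKrullDim_eq_zero_of_field, Nat.cast_zero]
  | succ n ih => rw [ringKrullDim_eq_of_ringEquiv (MvPowerSeries.finSuccEquiv k n).toRingEquiv,
      ringKrullDim_powerSeries, ih, Nat.cast_succ]

end PowerSeries

theorem exists_radical_span_range_eq_maximalIdeal {S : Type*} [CommRing S]
    [IsNoetherianRing S] [IsLocalRing S] {m : ℕ} (hdim : ringKrullDim S = m) :
    ∃ x : Fin m → S, (Ideal.span (Set.range x)).radical = maximalIdeal S := by
  obtain ⟨s, hs, hcard⟩ := Ideal.exists_finset_card_eq_height_of_isNoetherianRing (maximalIdeal S)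
  have hm : s.card = m := by
    rw [← IsLocalRing.maximalIdeal_height_eq_ringKrullDim, ← hcard] at hdim
    exact_mod_cast hdim
  refine ⟨(↑) ∘ (s.equivFinOfCardEq hm).symm, ?_⟩
  rw [EquivLike.range_comp, Subtype.range_coe]
  refine le_antisymm ((Ideal.IsPrime.radical_le_iff inferInstance).mpr hs.1.2) ?_
  rw [Ideal.radical_eq_sInf]
  refine le_sInf ?_
  rintro P ⟨hP, hPprime⟩
  exact hs.2 ⟨hPprime, hP⟩ (le_maximalIdeal hPprime.ne_top)

/-! ### Finiteness over a complete ring -/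

theorem isPrecomplete_pi {A ι : Type*} [CommRing A] [Finite ι] (I : Ideal A) (M : ι → Type*)
    [∀ i, AddCommGroup (M i)] [∀ i, Module A (M i)] [∀ i, IsPrecomplete I (M i)] :
    IsPrecomplete I (∀ i, M i) := by
  classical
  cases nonempty_fintype ι
  rw [← AdicCompletion.of_surjective_iff]
  intro y
  choose x hx using fun i ↦ AdicCompletion.of_surjective I (M i) (AdicCompletion.pi I M y i)
  refine ⟨x, (AdicCompletion.piEquivOfFintype I M).injective ?_⟩
  ext i : 1
  rw [AdicCompletion.piEquivOfFintype_apply, AdicCompletion.piEquivOfFintype_apply, ← hx]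
  simp [AdicCompletion.pi, AdicCompletion.map_of]

theorem finite_of_finite_quotient_smul_top {A M : Type*} [CommRing A] [AddCommGroup M] [Module A M]
    (I : Ideal A) [IsPrecomplete I A] [IsHausdorff I M]
    [Module.Finite A (M ⧸ (I • ⊤ : Submodule A M))] : Module.Finite A M := by
  obtain ⟨n, g, hg⟩ := Module.Finite.exists_fin' A (M ⧸ (I • ⊤ : Submodule A M))
  obtain ⟨f, hf⟩ := Module.projective_lifting_property (I • ⊤ : Submodule A M).mkQ g
    (Submodule.mkQ_surjective _)
  have : IsPrecomplete I (Fin n → A) := isPrecomplete_pi I _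
  exact .of_surjective f <| surjective_of_mkQ_comp_surjective (I := I) (by rwa [hf])

theorem finite_quotient_of_le_radical {A S : Type*} [CommRing A] [CommRing S] [Algebra A S]
    [IsNoetherianRing S] {I J : Ideal S} (hIJ : I ≤ J) (hJI : J ≤ I.radical)
    [Module.Finite A (S ⧸ J)] : Module.Finite A (S ⧸ I) := by
  refine Module.finite_of_surjective_of_ker_le_nilradical (Ideal.Quotient.factorₐ A hIJ)
    (Ideal.Quotient.factor_surjective hIJ) ?_ (IsNoetherian.noetherian _)
  have hker : RingHom.ker (Ideal.Quotient.factorₐ A hIJ) = J.map (Ideal.Quotient.mk I) :=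
    Ideal.Quotient.factor_ker hIJ
  rw [hker, nilradical, Ideal.zero_eq_bot, ← Ideal.map_quotient_self I]
  exact (Ideal.map_mono hJI).trans (Ideal.map_radical_le _)

theorem finite_of_radical_map_eq_maximalIdeal {A S : Type*} [CommRing A] [CommRing S]
    [Algebra A S] [IsNoetherianRing S] [IsLocalRing S] (I : Ideal A) [IsPrecomplete I A]
    (hI : (I.map (algebraMap A S)).radical = maximalIdeal S)
    [Module.Finite A (S ⧸ maximalIdeal S)] : Module.Finite A S := by
  have hle : I.map (algebraMap A S) ≤ maximalIdeal S := hI ▸ Ideal.le_radical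
  have : IsHausdorff I S := IsHausdorff.map_algebraMap_iff.mp <|
    .of_isLocalRing _ _ fun htop ↦ (maximalIdeal.isMaximal S).ne_top (top_le_iff.mp (htop ▸ hle))
  have : Module.Finite A (S ⧸ (I • ⊤ : Submodule A S)) := by
    have := finite_quotient_of_le_radical (A := A) hle hI.ge
    rw [Ideal.smul_top_eq_map]
    exact .equiv (Submodule.Quotient.restrictScalarsEquiv A (I.map (algebraMap A S))).symm
  exact finite_of_finite_quotient_smul_top I

/-! ### Normalization by a power series ring -/

theorem charP_of_expChar_prime (R : Type*) [AddMonoidWithOne R] (p : ℕ) [Fact p.Prime]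
    [ExpChar R p] : CharP R p := by
  have hp : p.Prime := Fact.out
  rcases ‹ExpChar R p› with _ | _
  · exact absurd hp Nat.not_prime_one
  · assumption

theorem exists_ringHom_section_quotientMk {R : Type*} [CommRing R] (I : Ideal R)
    [IsAdicComplete I R] (p : ℕ) [Fact p.Prime] [CharP R p] [CharP (R ⧸ I) p]
    [PerfectRing (R ⧸ I) p] :
    ∃ τ : R ⧸ I →+* R, (Ideal.Quotient.mk I).comp τ = RingHom.id (R ⧸ I) := by
  let e : Perfection R p ≃+* Perfection (R ⧸ I) p :=
    .ofBijective (Perfection.map p (Ideal.Quotient.mk I))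
      (Perfection.quotientMulEquiv p I).bijective
  let l : R ⧸ I →+* Perfection (R ⧸ I) p :=
    Perfection.lift p (R ⧸ I) (R ⧸ I) (RingHom.id _)
  have hl : (Perfection.coeff (R ⧸ I) p 0).comp l = RingHom.id _ :=
    (Perfection.lift p (R ⧸ I) (R ⧸ I)).symm_apply_apply _
  refine ⟨((Perfection.coeff R p 0).comp e.symm.toRingHom).comp l, RingHom.ext fun c ↦ ?_⟩
  calc Ideal.Quotient.mk I (Perfection.coeff R p 0 (e.symm (l c)))
      = Perfection.coeff (R ⧸ I) p 0 (e (e.symm (l c))) := (Perfection.coeff_map ..).symm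
    _ = Perfection.coeff (R ⧸ I) p 0 (l c) := by rw [e.apply_symm_apply]
    _ = c := RingHom.congr_fun hl c

theorem exists_mvPowerSeries_ringHom {S σ k : Type*} [CommRing S] (J : Ideal S)
    [IsAdicComplete J S] [CommRing k] (τ : k →+* S) [Finite σ] (x : σ → S) (hx : ∀ i, x i ∈ J) :
    ∃ φ : MvPowerSeries σ k →+* S, φ.comp MvPowerSeries.C = τ ∧
      ∀ i, φ (MvPowerSeries.X i) = x i := by
  let _ : WithIdeal S := ⟨J⟩
  let _ : UniformSpace k := ⊥
  have : DiscreteUniformity k := ⟨rfl⟩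
  obtain ⟨_, _⟩ := IsAdic.isAdicComplete_iff (R := S) (I := J) rfl |>.mp ‹_›
  have hτ : Continuous τ := continuous_of_discreteTopology
  have hx' : MvPowerSeries.HasEval x :=
    ⟨fun i ↦ WithIdeal.isTopologicallyNilpotent_of_mem (hx i), by simp⟩
  refine ⟨MvPowerSeries.eval₂Hom hτ hx', RingHom.ext fun c ↦ ?_, fun i ↦ ?_⟩
  · rw [RingHom.comp_apply, MvPowerSeries.coe_eval₂Hom, MvPowerSeries.eval₂_C]
  · rw [MvPowerSeries.coe_eval₂Hom, MvPowerSeries.eval₂_X]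

instance isDomain_mvPowerSeries (σ k : Type*) [CommRing k] [IsDomain k] :
    IsDomain (MvPowerSeries σ k) :=
  NoZeroDivisors.to_isDomain _

section Normalization

variable {S : Type*} [CommRing S] [IsNoetherianRing S] [IsLocalRing S]
  [IsAdicComplete (maximalIdeal S) S] {m : ℕ} (hdim : ringKrullDim S = m)
include hdim

theorem exists_finite_ringHom_mvPowerSeries {k : Type*} [CommRing k] (τ : k →+* S)
    (hτ : Function.Surjective ((Ideal.Quotient.mk (maximalIdeal S)).comp τ)) :
    ∃ φ : MvPowerSeries (Fin m) k →+* S, φ.Finite := by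
  obtain ⟨x, hx⟩ := exists_radical_span_range_eq_maximalIdeal hdim
  obtain ⟨φ, rfl, hX⟩ := exists_mvPowerSeries_ringHom (maximalIdeal S) τ x fun i ↦
    hx ▸ Ideal.le_radical (Ideal.subset_span ⟨i, rfl⟩)
  let _ : Algebra (MvPowerSeries (Fin m) k) S := φ.toAlgebra
  have hmap : (Ideal.span (Set.range MvPowerSeries.X)).map φ = Ideal.span (Set.range x) := by
    rw [Ideal.map_span, ← Set.range_comp, ← funext hX, Function.comp_def]
  have hsurj : Function.Surjective
      (algebraMap (MvPowerSeries (Fin m) k) (S ⧸ maximalIdeal S)) :=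
    .of_comp (g := MvPowerSeries.C) hτ
  have : Module.Finite (MvPowerSeries (Fin m) k) (S ⧸ maximalIdeal S) :=
    .of_surjective (Algebra.linearMap _ _) hsurj
  exact ⟨φ, finite_of_radical_map_eq_maximalIdeal (.span (Set.range MvPowerSeries.X))
    ((congrArg Ideal.radical hmap).trans hx)⟩

theorem exists_finite_injective_ringHom_mvPowerSeries (p : ℕ) [Fact p.Prime] [CharP S p]
    [ExpChar (ResidueField S) p] [PerfectRing (ResidueField S) p] :
    ∃ φ : MvPowerSeries (Fin m) (ResidueField S) →+* S, φ.Finite ∧ Function.Injective φ := by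
  have : CharP (S ⧸ maximalIdeal S) p := charP_of_expChar_prime (ResidueField S) p
  have : PerfectRing (S ⧸ maximalIdeal S) p := ‹PerfectRing (ResidueField S) p›
  obtain ⟨τ, hτ⟩ := exists_ringHom_section_quotientMk (maximalIdeal S) p
  obtain ⟨φ, hφ⟩ := exists_finite_ringHom_mvPowerSeries hdim (k := ResidueField S) τ
    fun c ↦ ⟨c, RingHom.congr_fun hτ c⟩
  let _ : Algebra (MvPowerSeries (Fin m) (ResidueField S)) S := φ.toAlgebra
  have : Module.Finite (MvPowerSeries (Fin m) (ResidueField S)) S := hφ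
  exact ⟨φ, hφ, algebraMap_injective_of_ringKrullDim_le
    ((ringKrullDim_mvPowerSeries_fin _ m).trans hdim.symm).le⟩

end Normalization

/-! ### Restriction of scalars along Frobenius -/

namespace FrobRestrict

section Module

variable (R M : Type*) (p e : ℕ) [CommRing R] [ExpChar R p] [AddCommGroup M] [Module R M]

/-- The identity map from `FrobRestrict R p e M` to `M`, used to move between the two
`R`-module structures. It is only semilinear, along the `e`-th iterated Frobenius. -/
def addEquiv : FrobRestrict R p e M ≃+ M :=
  .refl M

variable {R M p e}

theorem addEquiv_smul (r : R) (x : FrobRestrict R p e M) :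
    addEquiv R M p e (r • x) = r ^ p ^ e • addEquiv R M p e x :=
  congrArg (· • addEquiv R M p e x) (iterateFrobenius_def p e r)

instance noZeroSMulDivisors [IsReduced R] [NoZeroSMulDivisors R M] :
    NoZeroSMulDivisors R (FrobRestrict R p e M) where
  eq_zero_or_eq_zero_of_smul_eq_zero {r x} hrx := by
    have h : r ^ p ^ e • addEquiv R M p e x = 0 := by
      rw [← addEquiv_smul, hrx, map_zero]
    exact (eq_zero_or_eq_zero_of_smul_eq_zero h).imp eq_zero_of_pow_eq_zero
      (AddEquiv.map_eq_zero_iff _).mp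

end Module

section Algebra

variable {R S : Type*} (p e : ℕ) [CommRing R] [ExpChar R p] [CommRing S] [Algebra R S]

scoped instance instCommRing : CommRing (FrobRestrict R p e S) := inferInstanceAs (CommRing S)

scoped instance instIsDomain [IsDomain S] : IsDomain (FrobRestrict R p e S) :=
  inferInstanceAs (IsDomain S)

scoped instance instAlgebra : Algebra R (FrobRestrict R p e S) where
  algebraMap := (algebraMap R S).comp (iterateFrobenius R p e)
  commutes' _ _ := mul_comm _ _
  smul_def' r (x : S) := Algebra.smul_def (iterateFrobenius R p e r) x

scoped instance instFaithfulSMul [IsReduced R] [FaithfulSMul R S] :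
    FaithfulSMul R (FrobRestrict R p e S) :=
  (faithfulSMul_iff_algebraMap_injective _ _).mpr <|
    (FaithfulSMul.algebraMap_injective R S).comp (iterateFrobenius_inj R p e)

end Algebra

section Tower

variable (A S : Type*) [CommRing A] [CommRing S] [Algebra A S] (p e : ℕ) [ExpChar A p]
  [ExpChar S p]

scoped instance algebraFrobRestrict : Algebra (FrobRestrict A p e A) (FrobRestrict S p e S) :=
  inferInstanceAs (Algebra A S)

/-- The `A`-algebra structure on `FrobRestrict S p e S` obtained from its `S`-algebra structure,
the diagonal of the square formed by `A → S` and the two Frobenius maps. It has low priority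
because it competes with `FrobRestrict.instAlgebra` for `A = S`. -/
scoped instance (priority := low) algebraOfBase : Algebra A (FrobRestrict S p e S) :=
  .compHom _ (algebraMap A S)

scoped instance isScalarTower_base : IsScalarTower A S (FrobRestrict S p e S) :=
  .of_algebraMap_eq fun _ ↦ rfl

scoped instance isScalarTower_frobRestrict_base :
    IsScalarTower A (FrobRestrict A p e A) (FrobRestrict S p e S) :=
  .of_algebraMap_eq fun a ↦ (RingHom.map_iterateFrobenius (algebraMap A S) p a e).symm

theorem finite_of_finite_base [Module.Finite A S] [Module.Finite A (FrobRestrict A p e A)] :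
    Module.Finite S (FrobRestrict S p e S) := by
  have : Module.Finite (FrobRestrict A p e A) (FrobRestrict S p e S) := ‹Module.Finite A S›
  have : Module.Finite A (FrobRestrict S p e S) := .trans (FrobRestrict A p e A) _
  exact .of_restrictScalars_finite A S _

theorem finrank_eq_finrank_base [IsDomain A] [IsDomain S] [Module.Finite A S] [FaithfulSMul A S] :
    Module.finrank S (FrobRestrict S p e S) = Module.finrank A (FrobRestrict A p e A) := by
  have : FaithfulSMul (FrobRestrict A p e A) (FrobRestrict S p e S) := ‹FaithfulSMul A S›
  refine mul_left_cancel₀ (Module.finrank_pos (R := A) (M := S)).ne' ?_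
  calc Module.finrank A S * Module.finrank S (FrobRestrict S p e S)
      = Module.finrank A (FrobRestrict S p e S) := finrank_mul_finrank_of_isDomain _ _ _
    _ = Module.finrank A (FrobRestrict A p e A) *
          Module.finrank (FrobRestrict A p e A) (FrobRestrict S p e S) :=
        (finrank_mul_finrank_of_isDomain _ _ _).symm
    _ = Module.finrank A S * Module.finrank A (FrobRestrict A p e A) := mul_comm _ _

end Tower

end FrobRestrict

/-! ### Frobenius on power series rings -/

section RemainderExponent

variable {σ : Type*} [Finite σ] {q : ℕ}

/-- The exponent vectors with all entries less than `q`. They are the remainders of the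
coordinatewise division by `q`, hence index the basis monomials over the `q`-th powers. -/
noncomputable def remainderExponent (a : σ → Fin q) : σ →₀ ℕ :=
  Finsupp.equivFunOnFinite.symm fun i ↦ a i

theorem exists_eq_smul_add_remainderExponent (hq : 0 < q) (d : σ →₀ ℕ) :
    ∃ (n : σ →₀ ℕ) (a : σ → Fin q), d = q • n + remainderExponent a := by
  refine ⟨Finsupp.equivFunOnFinite.symm fun i ↦ d i / q,
    fun i ↦ ⟨d i % q, Nat.mod_lt _ hq⟩, ?_⟩
  ext i
  simp [remainderExponent, Nat.div_add_mod]

theorem exists_not_dvd_sub_remainderExponent {a b : σ → Fin q} (hab : a ≠ b) {n : σ →₀ ℕ}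
    (hle : remainderExponent a ≤ q • n + remainderExponent b) :
    ∃ i, ¬ q ∣ (q • n + remainderExponent b - remainderExponent a) i := by
  obtain ⟨i, hi⟩ := Function.ne_iff.mp hab
  refine ⟨i, fun hdvd ↦ hi ?_⟩
  have hmod : (a i : ℕ) ≡ q * n i + b i [MOD q] := (Nat.modEq_iff_dvd' (hle i)).mpr hdvd
  have hmod' : (a i : ℕ) ≡ b i [MOD q] := by simpa [Nat.ModEq] using hmod
  exact Fin.ext (hmod'.eq_of_lt_of_lt (a i).isLt (b i).isLt)

end RemainderExponent

open MvPowerSeries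

instance expChar_mvPowerSeries (σ k : Type*) [CommRing k] (p : ℕ) [ExpChar k p] :
    ExpChar (MvPowerSeries σ k) p :=
  expChar_of_injective_ringHom (f := C) C_injective p

section Coeff

variable {σ k : Type*} [CommRing k] {p : ℕ} [ExpChar k p] (e : ℕ)

theorem coeff_smul_pow_expChar_pow (f : MvPowerSeries σ k) (n : σ →₀ ℕ) :
    coeff (p ^ e • n) (f ^ p ^ e) = coeff n f ^ p ^ e := by
  rw [← map_iterateFrobenius_expand p (expChar_ne_zero k p), coeff_map, coeff_expand_smul,
    iterateFrobenius_def]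

theorem coeff_pow_expChar_pow_of_not_dvd (f : MvPowerSeries σ k) {d : σ →₀ ℕ} {i : σ}
    (hd : ¬ p ^ e ∣ d i) : coeff d (f ^ p ^ e) = 0 := by
  rw [← map_iterateFrobenius_expand p (expChar_ne_zero k p), coeff_map,
    coeff_expand_of_not_dvd _ _ _ hd, map_zero]

theorem coeff_pow_expChar_pow_mul_monomial [Finite σ] [DecidableEq (σ → Fin (p ^ e))]
    (f : MvPowerSeries σ k) (n : σ →₀ ℕ) (a b : σ → Fin (p ^ e)) :
    coeff (p ^ e • n + remainderExponent b) (f ^ p ^ e * monomial (remainderExponent a) 1) =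
      if a = b then coeff n f ^ p ^ e else 0 := by
  split_ifs with hab
  · rw [hab, coeff_add_mul_monomial, mul_one, coeff_smul_pow_expChar_pow]
  rw [coeff_mul_monomial]
  split_ifs with hle
  · obtain ⟨i, hi⟩ := exists_not_dvd_sub_remainderExponent hab hle
    rw [coeff_pow_expChar_pow_of_not_dvd e f hi, zero_mul]
  · rfl

end Coeff

section FrobeniusCombination

variable (σ k : Type*) [DecidableEq σ] [Fintype σ] [CommRing k] (p e : ℕ) [ExpChar k p]

/-- The linear map `c ↦ ∑ a, c a ^ p ^ e * X ^ a`, with `a` running through the exponent vectors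
with entries less than `p ^ e`. For perfect `k` it exhibits the monomials `X ^ a` as a basis of
the power series ring over itself via the `e`-th iterated Frobenius. -/
noncomputable def frobeniusCombination :
    ((σ → Fin (p ^ e)) → MvPowerSeries σ k) →ₗ[MvPowerSeries σ k]
      FrobRestrict (MvPowerSeries σ k) p e (MvPowerSeries σ k) :=
  Fintype.linearCombination (MvPowerSeries σ k) fun a ↦
    (FrobRestrict.addEquiv _ _ p e).symm (monomial (remainderExponent a) 1)

variable {σ k p e}

theorem coeff_frobeniusCombination (c : (σ → Fin (p ^ e)) → MvPowerSeries σ k) (n : σ →₀ ℕ)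
    (b : σ → Fin (p ^ e)) :
    coeff (p ^ e • n + remainderExponent b)
      (FrobRestrict.addEquiv _ _ p e (frobeniusCombination σ k p e c)) =
      coeff n (c b) ^ p ^ e := by
  simp only [frobeniusCombination, Fintype.linearCombination_apply, map_sum,
    FrobRestrict.addEquiv_smul, AddEquiv.apply_symm_apply, smul_eq_mul,
    coeff_pow_expChar_pow_mul_monomial, Finset.sum_ite_eq', Finset.mem_univ, if_true]

variable [PerfectRing k p]

theorem frobeniusCombination_injective : Function.Injective (frobeniusCombination σ k p e) := by
  intro c c' hcc'
  ext b n
  apply (iterateFrobeniusEquiv k p e).injective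
  rw [iterateFrobeniusEquiv_def, iterateFrobeniusEquiv_def, ← coeff_frobeniusCombination, hcc',
    coeff_frobeniusCombination]

theorem frobeniusCombination_surjective : Function.Surjective (frobeniusCombination σ k p e) := by
  intro f
  let c (b : σ → Fin (p ^ e)) : MvPowerSeries σ k := fun n ↦ (iterateFrobeniusEquiv k p e).symm
    (coeff (p ^ e • n + remainderExponent b) (FrobRestrict.addEquiv _ _ p e f))
  refine ⟨c, (FrobRestrict.addEquiv _ _ p e).injective (MvPowerSeries.ext fun d ↦ ?_)⟩
  obtain ⟨n, b, rfl⟩ := exists_eq_smul_add_remainderExponent (expChar_pow_pos k p e) d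
  rw [coeff_frobeniusCombination, ← iterateFrobeniusEquiv_def]
  exact (iterateFrobeniusEquiv k p e).apply_symm_apply _

end FrobeniusCombination

section PerfectCoefficients

variable (σ k : Type*) [Finite σ] [CommRing k] (p e : ℕ) [ExpChar k p] [PerfectRing k p]

theorem finite_frobRestrict_mvPowerSeries : Module.Finite (MvPowerSeries σ k)
    (FrobRestrict (MvPowerSeries σ k) p e (MvPowerSeries σ k)) := by
  classical
  cases nonempty_fintype σ
  exact .of_surjective (frobeniusCombination σ k p e) frobeniusCombination_surjective

theorem finrank_frobRestrict_mvPowerSeries [Nontrivial k] : Module.finrank (MvPowerSeries σ k)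
    (FrobRestrict (MvPowerSeries σ k) p e (MvPowerSeries σ k)) = p ^ (e * Nat.card σ) := by
  classical
  cases nonempty_fintype σ
  rw [← (LinearEquiv.ofBijective (frobeniusCombination σ k p e)
      ⟨frobeniusCombination_injective, frobeniusCombination_surjective⟩).finrank_eq,
    Module.finrank_fintype_fun_eq_card, Fintype.card_fun, Fintype.card_fin, ← pow_mul,
    Nat.card_eq_fintype_card]

end PerfectCoefficients

section PerfectResidueField

variable (S : Type*) [CommRing S] [IsNoetherianRing S] [IsLocalRing S]
  [IsAdicComplete (maximalIdeal S) S] (p e : ℕ) [Fact p.Prime] [CharP S p]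
  [ExpChar (ResidueField S) p] [PerfectRing (ResidueField S) p] {m : ℕ}
  (hdim : ringKrullDim S = m)
include hdim

theorem finite_frobRestrict_of_perfect_residueField : Module.Finite S (FrobRestrict S p e S) := by
  obtain ⟨φ, hφ, -⟩ := exists_finite_injective_ringHom_mvPowerSeries hdim p
  let _ : Algebra (MvPowerSeries (Fin m) (ResidueField S)) S := φ.toAlgebra
  have : Module.Finite (MvPowerSeries (Fin m) (ResidueField S)) S := hφ
  have := finite_frobRestrict_mvPowerSeries (Fin m) (ResidueField S) p e
  exact FrobRestrict.finite_of_finite_base (MvPowerSeries (Fin m) (ResidueField S)) S p e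

theorem finrank_frobRestrict_of_perfect_residueField [IsDomain S] :
    Module.finrank S (FrobRestrict S p e S) = p ^ (e * m) := by
  obtain ⟨φ, hφ, hinj⟩ := exists_finite_injective_ringHom_mvPowerSeries hdim p
  let _ : Algebra (MvPowerSeries (Fin m) (ResidueField S)) S := φ.toAlgebra
  have : Module.Finite (MvPowerSeries (Fin m) (ResidueField S)) S := hφ
  have : FaithfulSMul (MvPowerSeries (Fin m) (ResidueField S)) S :=
    (faithfulSMul_iff_algebraMap_injective _ _).mpr hinj
  rw [FrobRestrict.finrank_eq_finrank_base (MvPowerSeries (Fin m) (ResidueField S)),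
    finrank_frobRestrict_mvPowerSeries, Nat.card_fin]

end PerfectResidueField

theorem stmt17_general (S : Type*) [CommRing S] [IsDomain S] [IsNoetherianRing S] [IsLocalRing S]
    [IsAdicComplete (maximalIdeal S) S] (p e : ℕ) [Fact p.Prime] [CharP S p]
    [ExpChar (ResidueField S) p] [PerfectRing (ResidueField S) p]
    {m : ℕ} (hdim : ringKrullDim S = m) :
    NoZeroSMulDivisors S (FrobRestrict S p e S) ∧
      Module.rank (FractionRing S)
          (TensorProduct S (FractionRing S) (FrobRestrict S p e S)) = p ^ (e * m) ∧
      ∃ f : (Fin (p ^ (e * m)) → S) →ₗ[S] FrobRestrict S p e S,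
        Function.Injective f ∧
          Module.Finite S (FrobRestrict S p e S ⧸ LinearMap.range f) ∧
          Module.supportDim S (FrobRestrict S p e S ⧸ LinearMap.range f) < m := by
  have := finite_frobRestrict_of_perfect_residueField S p e hdim
  have hrank := finrank_frobRestrict_of_perfect_residueField S p e hdim
  obtain ⟨f, hf, hQ⟩ := exists_injective_isTorsion_quotient_range S (FrobRestrict S p e S)
  have hQdim := supportDim_lt_ringKrullDim_of_isTorsion hQ
  refine ⟨inferInstance, ?_, hrank ▸ ⟨f, hf, inferInstance, hdim ▸ hQdim⟩⟩
  rw [rank_fractionRing_tensorProduct, hrank, Nat.cast_pow]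

/-- For a complete Noetherian local domain `S` of prime characteristic `p` with perfect
residue field and Krull dimension `m`, the Frobenius restriction `ᶠS` of `S` is a
torsion-free `S`-module of generic rank `p^m`; consequently there is a short exact
sequence `0 → S^{p^m} → ᶠS → Q → 0` with `Q` finitely generated of dimension `< m`. -/
theorem stmt17 (S : Type*) [CommRing S] [IsDomain S] [IsNoetherianRing S] [IsLocalRing S]
    (hcomplete : IsAdicComplete (maximalIdeal S) S)
    (p : ℕ) [Fact p.Prime] [CharP S p]
    [ExpChar (ResidueField S) p] [PerfectRing (ResidueField S) p]
    (m : ℕ) (hdim : ringKrullDim S = m) :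
    NoZeroSMulDivisors S (FrobRestrict S p 1 S) ∧
      Module.rank (FractionRing S)
          (TensorProduct S (FractionRing S) (FrobRestrict S p 1 S)) = p ^ m ∧
      ∃ f : (Fin (p ^ m) → S) →ₗ[S] FrobRestrict S p 1 S,
        Function.Injective f ∧
          Module.Finite S (FrobRestrict S p 1 S ⧸ LinearMap.range f) ∧
          Order.krullDim
              (Module.support S (FrobRestrict S p 1 S ⧸ LinearMap.range f)) <
            (m : WithBot (WithTop ℕ)) := by
  have h := stmt17_general S p 1 hdim
  rwa [one_mul] at h
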